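/- Let G be a finite abelian non-cyclic group. Then the complement graph Γ̄_G does not have both an isolated vertex (a vertex adjacent to no other vertex of Γ̄_G) and a vertex of degree exactly 1. -/

import Mathlib

/-- The cyclicizer of a group `G`: the set of `y` such that `⟨x, y⟩` is cyclic
for every `x ∈ G`. -/
def cyclicizer (G : Type*) [Group G] : Set G :=
  {y | ∀ x : G, IsCyclic (Subgroup.closure ({x, y} : Set G))}

/-!
An isolated vertex `x` has order `2`, since `x⁻¹` is adjacent to `x` unless they coincide. It also
forces the cyclicizer to be trivial: for `c` in the cyclicizer, `x * c` is a vertex generating a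
cyclic subgroup together with `x`, so `x * c = x`. If moreover `w` is the only neighbour of `y`,
then all elements of the cyclic subgroup `⟨y, w⟩` lie in `{1, y, w}`, so `y` has order `3`.
Commuting elements of orders `2` and `3` generate a cyclic subgroup, so if `x` and `y` commuted
they would be adjacent.
-/

section

variable {G : Type*} [Group G]

theorem left_mem_closure_pair (a b : G) : a ∈ Subgroup.closure ({a, b} : Set G) :=
  Subgroup.mem_closure_of_mem (Set.mem_insert a {b})

theorem right_mem_closure_pair (a b : G) : b ∈ Subgroup.closure ({a, b} : Set G) :=
  Subgroup.mem_closure_of_mem (Set.mem_insert_of_mem a (Set.mem_singleton b))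

theorem isCyclic_closure_pair_of_mem {H : Subgroup G} [IsCyclic H] {a b : G}
    (ha : a ∈ H) (hb : b ∈ H) : IsCyclic (Subgroup.closure ({a, b} : Set G)) :=
  Subgroup.isCyclic_of_le ((Subgroup.closure_le H).mpr (Set.pair_subset ha hb))

theorem mem_zpowers_mul_of_commute_of_coprime {a b : G} (hab : Commute a b)
    (hco : (orderOf a).Coprime (orderOf b)) : a ∈ Subgroup.zpowers (a * b) := by
  obtain ⟨m, hm⟩ := exists_pow_eq_self_of_coprime hco.symm
  have hpow : (a * b) ^ orderOf b = a ^ orderOf b := by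
    rw [hab.mul_pow, pow_orderOf_eq_one, mul_one]
  have hmem : ((a * b) ^ orderOf b) ^ m ∈ Subgroup.zpowers (a * b) :=
    pow_mem (pow_mem (Subgroup.mem_zpowers (a * b)) _) m
  rwa [hpow, hm] at hmem

theorem isCyclic_closure_pair_of_commute_of_coprime {a b : G} (hab : Commute a b)
    (hco : (orderOf a).Coprime (orderOf b)) :
    IsCyclic (Subgroup.closure ({a, b} : Set G)) :=
  isCyclic_closure_pair_of_mem (mem_zpowers_mul_of_commute_of_coprime hab hco)
    (hab.eq ▸ mem_zpowers_mul_of_commute_of_coprime hab.symm hco.symm)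

theorem one_mem_cyclicizer : (1 : G) ∈ cyclicizer G := fun x =>
  isCyclic_closure_pair_of_mem (Subgroup.mem_zpowers x) (one_mem _)

theorem inv_mem_cyclicizer {a : G} (ha : a ∈ cyclicizer G) : a⁻¹ ∈ cyclicizer G := fun x =>
  have := ha x
  isCyclic_closure_pair_of_mem (left_mem_closure_pair x a) (inv_mem (right_mem_closure_pair x a))

theorem mul_mem_cyclicizer {a b : G} (ha : a ∈ cyclicizer G) (hb : b ∈ cyclicizer G) :
    a * b ∈ cyclicizer G := by
  intro x
  obtain ⟨g, hg⟩ := (Subgroup.isCyclic_iff_exists_zpowers_eq_top _).mp (ha x)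
  have := hb g
  have hle : Subgroup.closure {x, a} ≤ Subgroup.closure {g, b} := by
    rw [← hg, Subgroup.zpowers_le]
    exact left_mem_closure_pair g b
  exact isCyclic_closure_pair_of_mem (hle (left_mem_closure_pair x a))
    (mul_mem (hle (right_mem_closure_pair x a)) (right_mem_closure_pair g b))

variable (G) in
/-- The cyclicizer of `G` as a subgroup; its carrier is `cyclicizer G`. -/
def cyclicizerSubgroup : Subgroup G where
  carrier := cyclicizer G
  one_mem' := one_mem_cyclicizer
  mul_mem' := mul_mem_cyclicizer
  inv_mem' := inv_mem_cyclicizer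

/-- `x` is an isolated vertex of the complement of the non-cyclic graph of `G`. -/
structure IsIsolatedVertex (x : G) : Prop where
  notMem_cyclicizer : x ∉ cyclicizer G
  not_isCyclic : ∀ z : G, z ∉ cyclicizer G → z ≠ x →
    ¬ IsCyclic (Subgroup.closure ({x, z} : Set G))

/-- `w` is the only neighbour of the vertex `y` in the complement of the non-cyclic graph of `G`;
thus `y` has degree one exactly when such a `w` exists. -/
structure HasOnlyNeighbor (y w : G) : Prop where
  notMem_cyclicizer : y ∉ cyclicizer G
  neighbor_notMem_cyclicizer : w ∉ cyclicizer G
  neighbor_ne : w ≠ y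
  isCyclic : IsCyclic (Subgroup.closure ({y, w} : Set G))
  eq_neighbor : ∀ z : G, z ∉ cyclicizer G → z ≠ y →
    IsCyclic (Subgroup.closure ({y, z} : Set G)) → z = w

theorem IsIsolatedVertex.eq_of_isCyclic {x z : G} (hx : IsIsolatedVertex x)
    (hz : z ∉ cyclicizer G) (hxz : IsCyclic (Subgroup.closure ({x, z} : Set G))) : z = x :=
  not_not.mp fun hne => hx.not_isCyclic z hz hne hxz

theorem IsIsolatedVertex.orderOf_eq_two {x : G} (hx : IsIsolatedVertex x) : orderOf x = 2 := by
  have hinv : x⁻¹ = x := hx.eq_of_isCyclic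
    (fun h => hx.notMem_cyclicizer ((cyclicizerSubgroup G).inv_mem_iff.mp h))
    (isCyclic_closure_pair_of_mem (Subgroup.mem_zpowers x) (inv_mem (Subgroup.mem_zpowers x)))
  refine orderOf_eq_prime ?_ (ne_of_mem_of_not_mem one_mem_cyclicizer hx.notMem_cyclicizer).symm
  rw [pow_two, ← inv_eq_iff_mul_eq_one, hinv]

theorem IsIsolatedVertex.cyclicizer_eq_singleton_one {x : G} (hx : IsIsolatedVertex x) :
    cyclicizer G = {1} := by
  refine Set.Subset.antisymm (fun c hc => ?_) (Set.singleton_subset_iff.mpr one_mem_cyclicizer)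
  have hxc : x * c ∉ cyclicizer G := fun h =>
    hx.notMem_cyclicizer (((cyclicizerSubgroup G).mul_mem_cancel_right hc).mp h)
  have := hc x
  have hcyc : IsCyclic (Subgroup.closure ({x, x * c} : Set G)) :=
    isCyclic_closure_pair_of_mem (left_mem_closure_pair x c)
      (mul_mem (left_mem_closure_pair x c) (right_mem_closure_pair x c))
  exact mul_eq_left.mp (hx.eq_of_isCyclic hxc hcyc)

theorem HasOnlyNeighbor.coe_closure_pair {y w : G} (hyw : HasOnlyNeighbor y w)
    (hG : cyclicizer G = {1}) :
    (Subgroup.closure ({y, w} : Set G) : Set G) = {1, y, w} := by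
  refine Set.Subset.antisymm (fun z hz => ?_) ?_
  · by_cases hz1 : z = 1
    · exact .inl hz1
    by_cases hzy : z = y
    · exact .inr (.inl hzy)
    have := hyw.isCyclic
    have hyz : IsCyclic (Subgroup.closure ({y, z} : Set G)) :=
      isCyclic_closure_pair_of_mem (left_mem_closure_pair y w) hz
    exact .inr (.inr (hyw.eq_neighbor z (by rwa [hG]) hzy hyz))
  · rintro z (rfl | rfl | rfl)
    exacts [one_mem _, left_mem_closure_pair _ _, right_mem_closure_pair _ _]

theorem HasOnlyNeighbor.orderOf_eq_three {y w : G} (hyw : HasOnlyNeighbor y w)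
    (hG : cyclicizer G = {1}) : orderOf y = 3 := by
  have hy1 : 1 ≠ y := ne_of_mem_of_not_mem one_mem_cyclicizer hyw.notMem_cyclicizer
  have hw1 : 1 ≠ w := ne_of_mem_of_not_mem one_mem_cyclicizer hyw.neighbor_notMem_cyclicizer
  have hcard : Nat.card (Subgroup.closure ({y, w} : Set G)) = 3 := by
    rw [← SetLike.coe_sort_coe, hyw.coe_closure_pair hG, Nat.card_coe_set_eq]
    exact Set.ncard_eq_three.mpr ⟨1, y, w, hy1, hw1, hyw.neighbor_ne.symm, rfl⟩
  have hdvd : orderOf y ∣ 3 :=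
    hcard ▸ Subgroup.orderOf_dvd_natCard _ (left_mem_closure_pair y w)
  exact ((Nat.dvd_prime Nat.prime_three).mp hdvd).resolve_left
    (mt orderOf_eq_one_iff.mp hy1.symm)

end

theorem abelian_not_isolated_and_degree_one_general {G : Type*} [Group G] {x y w : G}
    (hx : IsIsolatedVertex x) (hyw : HasOnlyNeighbor y w) : ¬ Commute x y := by
  intro hcomm
  have hx2 : orderOf x = 2 := hx.orderOf_eq_two
  have hy3 : orderOf y = 3 := hyw.orderOf_eq_three hx.cyclicizer_eq_singleton_one
  have hcyc : IsCyclic (Subgroup.closure ({x, y} : Set G)) :=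
    isCyclic_closure_pair_of_commute_of_coprime hcomm (by rw [hx2, hy3]; norm_num)
  have hyx : y = x := hx.eq_of_isCyclic hyw.notMem_cyclicizer hcyc
  rw [hyx, hx2] at hy3
  contradiction

theorem abelian_not_isolated_and_degree_one (G : Type*) [CommGroup G] [Finite G]
    (hG : ¬ IsCyclic G) :
    ¬ ((∃ x : G, x ∉ cyclicizer G ∧
          ∀ z : G, z ∉ cyclicizer G → z ≠ x →
            ¬ IsCyclic (Subgroup.closure ({x, z} : Set G))) ∧
       (∃ y w : G, y ∉ cyclicizer G ∧ w ∉ cyclicizer G ∧ w ≠ y ∧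
          IsCyclic (Subgroup.closure ({y, w} : Set G)) ∧
          ∀ z : G, z ∉ cyclicizer G → z ≠ y →
            IsCyclic (Subgroup.closure ({y, z} : Set G)) → z = w)) := by
  rintro ⟨⟨x, hx, hiso⟩, y, w, hy, hw, hwy, hcyc, huniq⟩
  exact abelian_not_isolated_and_degree_one_general ⟨hx, hiso⟩ ⟨hy, hw, hwy, hcyc, huniq⟩
    (.all x y)
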